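/- Let h be a right-ideal morphism of nA* with domC(h) finite, and let Q ⊆ Im(h) be a finite set such that for all q ∈ Q and all y ∈ h(domC(h)): if y ∨ q exists then y ≤_init q. Then h⁻¹(Q·nA^ω) = h⁻¹(Q)·nA^ω, where h⁻¹(Q·nA^ω) is computed for the extension of h to nA^ω (with domain domC(h)·nA^ω, mapping pu to h(p)u for p ∈ domC(h), u ∈ nA^ω). -/

import Mathlib

open Stream'

variable {A : Type*} {n : ℕ}

/-- The initial-factor order `u ≤_init v` on `n`-tuples of strings:
`u i` is a prefix of `v i` for every coordinate `i`. -/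
def initLE (u v : Fin n → List A) : Prop := ∀ i, u i <+: v i

/-- `w` is the join (least upper bound w.r.t. `initLE`) of `u` and `v`. -/
def IsJoin (u v w : Fin n → List A) : Prop :=
  initLE u w ∧ initLE v w ∧ ∀ z, initLE u z → initLE v z → initLE w z

/-- The join of `u` and `v` exists. -/
def JoinEx (u v : Fin n → List A) : Prop := ∃ w, IsJoin u v w

/-- The set join `X ∨ Y = {x ∨ y : x ∈ X, y ∈ Y, x ∨ y exists}`. -/
def setJoin (X Y : Set (Fin n → List A)) : Set (Fin n → List A) :=
  {w | ∃ x ∈ X, ∃ y ∈ Y, IsJoin x y w}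

/-- A joinless code: no two distinct elements have a join. -/
def Joinless (S : Set (Fin n → List A)) : Prop :=
  ∀ x ∈ S, ∀ y ∈ S, x ≠ y → ¬ JoinEx x y

/-- A maximal joinless code. -/
def MaxJoinless (S : Set (Fin n → List A)) : Prop :=
  Joinless S ∧ ∀ T : Set (Fin n → List A), Joinless T → S ⊆ T → S = T

/-- Coordinatewise concatenation in `nA*`. -/
def cat (x v : Fin n → List A) : Fin n → List A := fun i => x i ++ v i

/-- The right ideal `S·nA*` generated by `S`. -/
def rIdeal (S : Set (Fin n → List A)) : Set (Fin n → List A) :=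
  {w | ∃ s ∈ S, ∃ v, w = cat s v}

/-- Coordinatewise concatenation of a tuple of finite strings
with a tuple of right-infinite words. -/
def catOmega (x : Fin n → List A) (w : Fin n → Stream' A) : Fin n → Stream' A :=
  fun i => x i ++ₛ w i

/-- `S·nA^ω`. -/
def omegaIdeal (S : Set (Fin n → List A)) : Set (Fin n → Stream' A) :=
  {w | ∃ s ∈ S, ∃ u, w = catOmega s u}

/-- `P ≡_fin Q`: the symmetric difference of the generated right ideals is finite. -/
def equivFin (P Q : Set (Fin n → List A)) : Prop :=
  (symmDiff (rIdeal P) (rIdeal Q)).Finite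

/-- `maxlen(S)`: the maximum coordinate length over a (finite nonempty) set. -/
noncomputable def maxlen (S : Set (Fin n → List A)) : ℕ :=
  sSup {m | ∃ x ∈ S, ∃ i, (x i).length = m}

/-- A right-ideal morphism of `nA*`, as a partial function:
if `f x = y` then `f (xv) = yv` (in particular the domain is a right ideal). -/
def IsRIM (f : (Fin n → List A) →. (Fin n → List A)) : Prop :=
  ∀ x y, y ∈ f x → ∀ v, cat y v ∈ f (cat x v)

/-- The domain code `domC f`: the `initLE`-minimal elements of `Dom f`
(the unique initial-factor code generating the right ideal `Dom f`). -/
def domC (f : (Fin n → List A) →. (Fin n → List A)) : Set (Fin n → List A) :=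
  {x ∈ f.Dom | ∀ y ∈ f.Dom, initLE y x → y = x}

/-- The image code `imC f`: the `initLE`-minimal elements of `Im f`
(the unique initial-factor code generating the right ideal `Im f`). -/
def imC (f : (Fin n → List A) →. (Fin n → List A)) : Set (Fin n → List A) :=
  {y ∈ f.ran | ∀ z ∈ f.ran, initLE z y → z = y}

/-- An initial-factor code: an antichain for the strict initial-factor order. -/
def InitCode (S : Set (Fin n → List A)) : Prop :=
  ∀ x ∈ S, ∀ y ∈ S, initLE x y → x = y

/-- `maxlen` of a right-ideal morphism: `maxlen(domC(f) ∪ f(domC(f)))`. -/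
noncomputable def maxlenM (f : (Fin n → List A) →. (Fin n → List A)) : ℕ :=
  maxlen (domC f ∪ f.image (domC f))

/-!
If `h(p)u = qv` with `p ∈ domC h` and `q ∈ Q`, then `h(p)` and `q` are initial factors of one
infinite word, so they have a join; condition `(⋆)` turns this into `h(p) ≤_init q`, say
`q = h(p)z`, and cancellation gives `u = zv`. Hence `pu = (pz)v` with `h(pz) = q`. Conversely, if
`h(x) = q`, then `x = pz` for some `p ∈ domC h`, so the extension sends `xv = p(zv)` to
`h(p)zv = qv`.
-/

theorem initLE.refl (x : Fin n → List A) : initLE x x := fun i => List.prefix_refl (x i)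

theorem initLE.trans {x y z : Fin n → List A} (hxy : initLE x y) (hyz : initLE y z) :
    initLE x z := fun i => (hxy i).trans (hyz i)

theorem initLE.exists_eq_cat {x y : Fin n → List A} (hxy : initLE x y) : ∃ z, y = cat x z := by
  choose z hz using hxy
  exact ⟨z, funext fun i => (hz i).symm⟩

theorem initLE.eq_of_sum_length_le {x y : Fin n → List A} (hxy : initLE x y)
    (hlen : ∑ i, (y i).length ≤ ∑ i, (x i).length) : x = y := by
  have hle : ∀ i ∈ Finset.univ, (x i).length ≤ (y i).length := fun i _ => (hxy i).length_le
  have hsum : ∑ i, (x i).length = ∑ i, (y i).length := (Finset.sum_le_sum hle).antisymm hlen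
  have heq := (Finset.sum_eq_sum_iff_of_le hle).mp hsum
  exact funext fun i => (hxy i).eq_of_length (heq i (Finset.mem_univ i))

theorem exists_domC_initLE {f : (Fin n → List A) →. (Fin n → List A)} {x : Fin n → List A}
    (hx : x ∈ f.Dom) : ∃ p ∈ domC f, initLE p x := by
  obtain ⟨p, ⟨hp, hpx⟩, hmin⟩ := exists_minimalFor_of_wellFoundedLT
    (fun y => y ∈ f.Dom ∧ initLE y x) (fun y => ∑ i, (y i).length) ⟨x, hx, initLE.refl x⟩
  refine ⟨p, ⟨hp, fun y hy hyp => hyp.eq_of_sum_length_le ?_⟩, hpx⟩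
  exact hmin ⟨hy, hyp.trans hpx⟩ (Finset.sum_le_sum fun i _ => (hyp i).length_le)

theorem joinEx_of_prefix_or_prefix {x y : Fin n → List A}
    (hxy : ∀ i, x i <+: y i ∨ y i <+: x i) : JoinEx x y := by
  have coordinate_join (i : Fin n) :
      ∃ w, x i <+: w ∧ y i <+: w ∧ ∀ z, x i <+: z → y i <+: z → w <+: z := by
    rcases hxy i with hle | hle
    · exact ⟨y i, hle, List.prefix_refl _, fun _ _ hyz => hyz⟩
    · exact ⟨x i, List.prefix_refl _, hle, fun _ hxz _ => hxz⟩
  choose w hxw hyw hleast using coordinate_join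
  exact ⟨w, hxw, hyw, fun z hxz hyz i => hleast i (z i) (hxz i) (hyz i)⟩

theorem prefix_or_prefix_of_appendStream_eq {a b : List A} {s t : Stream' A}
    (hab : a ++ₛ s = b ++ₛ t) : a <+: b ∨ b <+: a := by
  wlog hlen : a.length ≤ b.length generalizing a b s t
  · exact (this hab.symm (Nat.le_of_not_le hlen)).symm
  · have htake : a = b.take a.length := by
      simpa [Stream'.take_append_of_le_length, hlen] using congrArg (Stream'.take a.length) hab
    exact Or.inl (List.prefix_iff_eq_take.mpr htake)

theorem catOmega_cat (x z : Fin n → List A) (u : Fin n → Stream' A) :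
    catOmega (cat x z) u = catOmega x (catOmega z u) :=
  funext fun _ => Stream'.append_append_stream _ _ _

theorem catOmega_right_injective (x : Fin n → List A) : Function.Injective (catOmega x) :=
  fun _ _ huv => funext fun i => Stream'.append_right_injective _ _ _ (congrFun huv i)

theorem joinEx_of_catOmega_eq {x y : Fin n → List A} {u v : Fin n → Stream' A}
    (hxy : catOmega x u = catOmega y v) : JoinEx x y :=
  joinEx_of_prefix_or_prefix fun i => prefix_or_prefix_of_appendStream_eq (congrFun hxy i)

/-- The preimage of `S` under the extension of `f` to `nA^ω`, which sends `pu` to `f(p)u` for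
`p ∈ domC f`. The extension is encoded as a relation, so that no choice of `p` is involved. -/
def omegaPreimage (f : (Fin n → List A) →. (Fin n → List A)) (S : Set (Fin n → Stream' A)) :
    Set (Fin n → Stream' A) :=
  {w | ∃ p ∈ domC f, ∃ u, w = catOmega p u ∧ ∃ y ∈ f p, catOmega y u ∈ S}

theorem omegaIdeal_preimage_subset {h : (Fin n → List A) →. (Fin n → List A)} (hh : IsRIM h)
    (Q : Set (Fin n → List A)) :
    omegaIdeal (h.preimage Q) ⊆ omegaPreimage h (omegaIdeal Q) := by
  rintro _ ⟨x, ⟨q, hq, hxq⟩, v, rfl⟩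
  obtain ⟨p, hp, hpx⟩ := exists_domC_initLE ((PFun.mem_dom h x).mpr ⟨q, hxq⟩)
  obtain ⟨z, rfl⟩ := hpx.exists_eq_cat
  obtain ⟨y, hy⟩ := (PFun.mem_dom h p).mp hp.1
  have hyz : cat y z = q := Part.mem_unique (hh p y hy z) hxq
  exact ⟨p, hp, catOmega z v, catOmega_cat p z v, y, hy, q, hq, v, by rw [← hyz, catOmega_cat]⟩

theorem omegaPreimage_omegaIdeal_subset {h : (Fin n → List A) →. (Fin n → List A)}
    (hh : IsRIM h) {Q : Set (Fin n → List A)}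
    (hstar : ∀ q ∈ Q, ∀ y ∈ h.image (domC h), JoinEx y q → initLE y q) :
    omegaPreimage h (omegaIdeal Q) ⊆ omegaIdeal (h.preimage Q) := by
  rintro _ ⟨p, hp, u, rfl, y, hy, q, hq, v, hyu⟩
  have hyq : initLE y q := hstar q hq y ⟨p, hp, hy⟩ (joinEx_of_catOmega_eq hyu)
  obtain ⟨z, rfl⟩ := hyq.exists_eq_cat
  have hu : u = catOmega z v := catOmega_right_injective y (hyu.trans (catOmega_cat y z v))
  exact ⟨cat p z, ⟨cat y z, hq, hh p y hy z⟩, v, by rw [hu, catOmega_cat]⟩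

theorem stmt_16_general {h : (Fin n → List A) →. (Fin n → List A)} (hh : IsRIM h)
    {Q : Set (Fin n → List A)}
    (hstar : ∀ q ∈ Q, ∀ y ∈ h.image (domC h), JoinEx y q → initLE y q) :
    omegaPreimage h (omegaIdeal Q) = omegaIdeal (h.preimage Q) :=
  (omegaPreimage_omegaIdeal_subset hh hstar).antisymm (omegaIdeal_preimage_subset hh Q)

/-- For a right-ideal morphism `h` with finite domain code and a finite `Q ⊆ Im h`
satisfying condition `(⋆)`, the preimage of `Q·nA^ω` under the extension of `h`
to `nA^ω` equals `h⁻¹(Q)·nA^ω`. -/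
theorem stmt_16 [Fintype A] [Nonempty A] (hn : 1 ≤ n)
    (h : (Fin n → List A) →. (Fin n → List A)) (hh : IsRIM h)
    (hdfin : (domC h).Finite) (Q : Set (Fin n → List A)) (hQfin : Q.Finite)
    (hQran : Q ⊆ h.ran)
    (hstar : ∀ q ∈ Q, ∀ y ∈ h.image (domC h), JoinEx y q → initLE y q) :
    {w : Fin n → Stream' A | ∃ p ∈ domC h, ∃ u, w = catOmega p u ∧
        ∃ y ∈ h p, catOmega y u ∈ omegaIdeal Q}
      = omegaIdeal (h.preimage Q) :=
  stmt_16_general hh hstar
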